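/- (Dual representation of KL_inf for bounded distributions.) For every probability distribution ν supported on [0,1] and every x ∈ (0,1): KL_inf^U(ν,B,x) = sup_{λ ∈ [0, 1/(1−x)]} E_{X∼ν}[ log(1 − λ(X − x)) ], and KL_inf^L(ν,B,x) = sup_{λ ∈ [0, 1/x]} E_{X∼ν}[ log(1 + λ(X − x)) ], with the convention log(z) = −∞ for z ≤ 0. -/

import Mathlib

open MeasureTheory ProbabilityTheory Filter Set
open scoped ENNReal

noncomputable section
open scoped Classical

/-- `B`: the family of probability distributions supported on `[0,1]`. -/
def Bset : Set (Measure ℝ) := {κ | IsProbabilityMeasure κ ∧ κ (Set.Icc (0:ℝ) 1)ᶜ = 0}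

/-- The mean `m(κ)` of a distribution `κ`. -/
def mmean (κ : Measure ℝ) : ℝ := ∫ x, x ∂κ

/-- KL divergence, valued in `[0,∞]`: `∫ log(dμ/dν) dμ` when `μ ≪ ν` and this integral is
finite, and `∞` otherwise. -/
def KLdiv (μ ν : Measure ℝ) : ℝ≥0∞ :=
  if μ ≪ ν ∧ Integrable (llr μ ν) μ then ENNReal.ofReal (∫ x, llr μ ν x ∂μ) else ⊤

/-- `KL_inf^U(ν,B,x) = inf{ KL(ν,κ) : κ ∈ B, m(κ) ≥ x }`. -/
def KLinfU (ν : Measure ℝ) (x : ℝ) : ℝ≥0∞ :=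
  ⨅ κ ∈ {κ ∈ Bset | x ≤ mmean κ}, KLdiv ν κ

/-- `KL_inf^L(ν,B,x) = inf{ KL(ν,κ) : κ ∈ B, m(κ) ≤ x }`. -/
def KLinfL (ν : Measure ℝ) (x : ℝ) : ℝ≥0∞ :=
  ⨅ κ ∈ {κ ∈ Bset | mmean κ ≤ x}, KLdiv ν κ

/-- `KL_inf(ν,B,x)`: equals `KL_inf^U` for `x ≥ m(ν)` and `KL_inf^L` for `x < m(ν)`. -/
def KLinf (ν : Measure ℝ) (x : ℝ) : ℝ≥0∞ :=
  if mmean ν ≤ x then KLinfU ν x else KLinfL ν x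

/-- Extended logarithm: `log z` for `z > 0`, and `−∞` for `z ≤ 0`. -/
def elog (z : ℝ) : EReal := if z ≤ 0 then ⊥ else ((Real.log z : ℝ) : EReal)

/-- Positive part of an extended real, as an element of `[0,∞]`. -/
def erealPos (x : EReal) : ℝ≥0∞ := if x = ⊤ then ⊤ else ENNReal.ofReal x.toReal

/-- The (extended-real valued) integral of an `EReal`-valued function: the difference of the
lower integrals of its positive and negative parts. -/
def integralEReal (ν : Measure ℝ) (f : ℝ → EReal) : EReal :=
  ((∫⁻ y, erealPos (f y) ∂ν : ℝ≥0∞) : EReal) - ((∫⁻ y, erealPos (-(f y)) ∂ν : ℝ≥0∞) : EReal)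

/-! For `f = y - x` or `f = x - y`, bounded below by `-d` on `[0,1]` with equality at an endpoint
`e`, the constraint on the mean of `κ` is `∫ f ∂κ ≤ 0`. If `l ∈ [0, 1/d]`, the measure
`(1 + l * f) • κ` then has mass at most one, and Gibbs' inequality for `ν` against it gives
`∫ log (1 + l * f) ∂ν ≤ KL(ν, κ)`. Equality is attained by dividing `ν` by `1 + l * f` and putting
the missing mass at `e`, where `1 + l * f` vanishes when `l = 1/d`. This is feasible if `l` is `0`
(when `ν` itself is feasible), a zero of the derivative of the dual objective, or, when that
derivative stays positive, the endpoint `1/d`. -/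

open InformationTheory
open scoped Topology

section MeasurableSpace

variable {Ω : Type*} [MeasurableSpace Ω]

lemma lintegral_le_of_tendsto {ι : Type*} {u : Filter ι} [u.NeBot] [u.IsCountablyGenerated]
    {μ : Measure Ω} {F : ι → Ω → ℝ≥0∞} {G : Ω → ℝ≥0∞} {C : ℝ≥0∞}
    (hF : ∀ i, AEMeasurable (F i) μ) (hlim : ∀ᵐ ω ∂μ, Tendsto (F · ω) u (𝓝 (G ω)))
    (hC : ∀ᶠ i in u, ∫⁻ ω, F i ω ∂μ ≤ C) :
    ∫⁻ ω, G ω ∂μ ≤ C :=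
  calc ∫⁻ ω, G ω ∂μ
      = ∫⁻ ω, liminf (F · ω) u ∂μ :=
        lintegral_congr_ae (hlim.mono fun _ h => h.liminf_eq.symm)
    _ ≤ liminf (fun i => ∫⁻ ω, F i ω ∂μ) u := lintegral_liminf_le' hF
    _ ≤ liminf (fun _ => C) u := liminf_le_liminf hC
    _ = C := liminf_const C

lemma integrable_log_of_integrable_inv {μ : Measure Ω} {g : Ω → ℝ} (hpos : ∀ᵐ ω ∂μ, 0 < g ω)
    (hg : Integrable g μ) (hinv : Integrable (fun ω => (g ω)⁻¹) μ) :
    Integrable (fun ω => Real.log (g ω)) μ := by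
  refine (hinv.add hg).mono' hg.aemeasurable.log.aestronglyMeasurable ?_
  filter_upwards [hpos] with ω hω
  have hlog_le := Real.log_le_sub_one_of_pos hω
  have hlog_inv_le := Real.log_le_sub_one_of_pos (inv_pos.mpr hω)
  rw [Real.log_inv] at hlog_inv_le
  rw [Pi.add_apply, Real.norm_eq_abs, abs_le]
  constructor <;> linarith [inv_pos.mpr hω]

/-! ### Weak duality -/

lemma absolutelyContinuous_withDensity_of_ae_ne_zero {ν κ : Measure Ω} {g : Ω → ℝ≥0∞}
    (hνκ : ν ≪ κ) (hg : AEMeasurable g κ) (hg0 : ∀ᵐ ω ∂ν, g ω ≠ 0) :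
    ν ≪ κ.withDensity g := by
  intro s hs
  rw [withDensity_apply_eq_zero' hg] at hs
  refine measure_mono_null_ae ?_ (hνκ hs)
  filter_upwards [hg0] with ω hω hωs using ⟨hω, hωs⟩

lemma llr_withDensity_right {ν κ : Measure Ω} [SigmaFinite ν] [SigmaFinite κ] {g : Ω → ℝ}
    (hνκ : ν ≪ κ) (hg : Measurable g) (hpos : ∀ᵐ ω ∂ν, 0 < g ω) :
    llr ν (κ.withDensity fun ω => ENNReal.ofReal (g ω)) =ᵐ[ν]
      fun ω => llr ν κ ω - Real.log (g ω) := by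
  set κ' := κ.withDensity fun ω => ENNReal.ofReal (g ω)
  have : SigmaFinite κ' := .withDensity_ofReal g
  have hνκ' : ν ≪ κ' := absolutelyContinuous_withDensity_of_ae_ne_zero hνκ
    hg.ennreal_ofReal.aemeasurable (hpos.mono fun ω hω => (ENNReal.ofReal_pos.mpr hω).ne')
  have hchain := hνκ.ae_le (Measure.rnDeriv_mul_rnDeriv (κ := κ) hνκ')
  have hdensity := hνκ.ae_le (Measure.rnDeriv_withDensity κ hg.ennreal_ofReal)
  have hderiv_pos : ∀ᵐ ω ∂ν, 0 < (ν.rnDeriv κ' ω).toReal := by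
    filter_upwards [Measure.rnDeriv_pos hνκ', hνκ'.ae_le (Measure.rnDeriv_lt_top ν κ')]
      with ω h₀ htop using ENNReal.toReal_pos h₀.ne' htop.ne
  filter_upwards [hchain, hdensity, hpos, hderiv_pos] with ω hchain hdensity hpos hderiv_pos
  rw [llr, llr, ← hchain, Pi.mul_apply, hdensity, ENNReal.toReal_mul,
    ENNReal.toReal_ofReal hpos.le, Real.log_mul hderiv_pos.ne' hpos.ne', add_sub_cancel_right]

/- Gibbs' inequality for `ν` against `g • κ`, a measure whose mass is at most that of `κ`. -/
theorem ofReal_integral_log_le_klDiv {ν κ : Measure Ω} [IsFiniteMeasure ν] [IsFiniteMeasure κ]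
    {g : Ω → ℝ} (hg : Measurable g) (hpos : ∀ᵐ ω ∂ν, 0 < g ω)
    (hlog : Integrable (fun ω => Real.log (g ω)) ν) (hgκ : Integrable g κ)
    (hg0 : 0 ≤ᵐ[κ] g) (hmass : ∫ ω, g ω ∂κ ≤ κ.real univ) :
    ENNReal.ofReal (∫ ω, Real.log (g ω) ∂ν) ≤ klDiv ν κ := by
  by_cases hfin : klDiv ν κ = ∞
  · simp only [hfin, le_top]
  obtain ⟨hνκ, hllr⟩ := klDiv_ne_top_iff.mp hfin
  set κ' := κ.withDensity fun ω => ENNReal.ofReal (g ω) with hκ'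
  have : IsFiniteMeasure κ' := isFiniteMeasure_withDensity_ofReal hgκ.2
  have hνκ' : ν ≪ κ' := absolutelyContinuous_withDensity_of_ae_ne_zero hνκ
    hg.ennreal_ofReal.aemeasurable (hpos.mono fun ω hω => (ENNReal.ofReal_pos.mpr hω).ne')
  have hllr' := llr_withDensity_right hνκ hg hpos
  have hκ'_univ : κ'.real univ = ∫ ω, g ω ∂κ := by
    rw [measureReal_def, hκ', withDensity_apply _ .univ, Measure.restrict_univ,
      ← ofReal_integral_eq_lintegral_ofReal hgκ hg0,
      ENNReal.toReal_ofReal (integral_nonneg_of_ae hg0)]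
  have hgibbs := integral_llr_add_sub_measure_univ_nonneg hνκ'
    ((hllr.sub hlog).congr hllr'.symm)
  rw [integral_congr_ae hllr', integral_sub hllr hlog, hκ'_univ] at hgibbs
  rw [klDiv_of_ac_of_integrable hνκ hllr]
  exact ENNReal.ofReal_le_ofReal (by linarith)

lemma coe_klDiv_eq_integral_log_of_withDensity_eq {ν κ : Measure Ω} [IsFiniteMeasure ν]
    [IsFiniteMeasure κ] {g : Ω → ℝ} (hg : Measurable g) (hpos : ∀ᵐ ω ∂ν, 0 < g ω)
    (hmass : ν univ = κ univ) (hlog : Integrable (fun ω => Real.log (g ω)) ν)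
    (hν : κ.withDensity (fun ω => ENNReal.ofReal (g ω)) = ν) :
    (klDiv ν κ : EReal) = ((∫ ω, Real.log (g ω) ∂ν : ℝ) : EReal) := by
  have hνκ : ν ≪ κ := hν ▸ withDensity_absolutelyContinuous κ _
  have hllr : llr ν κ =ᵐ[ν] fun ω => Real.log (g ω) := by
    have hright := llr_withDensity_right hνκ hg hpos
    rw [hν] at hright
    filter_upwards [hright, llr_self ν] with ω h₁ h₂
    rw [h₂, Pi.zero_apply] at h₁
    linarith
  have hfin : klDiv ν κ ≠ ∞ := klDiv_ne_top hνκ (hlog.congr hllr.symm)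
  rw [← integral_congr_ae hllr, ← toReal_klDiv_of_measure_eq hνκ hmass,
    EReal.coe_ennreal_toReal hfin]

/-! ### The primal optimizer -/

/-- The candidate minimizer `g⁻¹ • ν + (1 - ∫ g⁻¹ dν) • δ_e`: the measure having `ν` as its
`g`-reweighting, completed to mass one at a point `e`, which is meant to be a zero of `g` whenever
some mass is missing. -/
def inverseReweighting (ν : Measure Ω) (g : Ω → ℝ≥0∞) (e : Ω) : Measure Ω :=
  ν.withDensity (fun ω => (g ω)⁻¹) + (1 - ∫⁻ ω, (g ω)⁻¹ ∂ν) • Measure.dirac e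

namespace inverseReweighting

variable {ν : Measure Ω} {g : Ω → ℝ≥0∞} {e : Ω}

lemma isProbabilityMeasure (hmass : ∫⁻ ω, (g ω)⁻¹ ∂ν ≤ 1) :
    IsProbabilityMeasure (inverseReweighting ν g e) := by
  refine ⟨?_⟩
  simp only [inverseReweighting, Measure.coe_add, Measure.coe_smul, Pi.add_apply, Pi.smul_apply,
    withDensity_apply _ MeasurableSet.univ, Measure.restrict_univ, measure_univ, smul_eq_mul,
    mul_one]
  exact add_tsub_cancel_of_le hmass

lemma ae_mem {K : Set Ω} (hK : MeasurableSet K) (he : e ∈ K) (hν : ∀ᵐ ω ∂ν, ω ∈ K) :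
    ∀ᵐ ω ∂(inverseReweighting ν g e), ω ∈ K := by
  refine (ae_add_measure_iff).mpr ⟨(withDensity_absolutelyContinuous ν _).ae_le hν, ?_⟩
  exact Measure.smul_absolutelyContinuous.ae_le ((mem_ae_dirac_iff hK).mpr he)

lemma withDensity_eq (hg : Measurable g) (hg0 : ∀ᵐ ω ∂ν, g ω ≠ 0) (hgtop : ∀ᵐ ω ∂ν, g ω ≠ ∞)
    (hslack : ∫⁻ ω, (g ω)⁻¹ ∂ν = 1 ∨ g e = 0) :
    (inverseReweighting ν g e).withDensity g = ν := by
  have hinv : (ν.withDensity fun ω => (g ω)⁻¹).withDensity g = ν := by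
    simpa only [inv_inv] using withDensity_inv_same (f := fun ω => (g ω)⁻¹) hg.inv
      (hgtop.mono fun ω h => ENNReal.inv_ne_zero.mpr h)
      (hg0.mono fun ω h => ENNReal.inv_ne_top.mpr h)
  have hatom : (1 - ∫⁻ ω, (g ω)⁻¹ ∂ν) * g e = 0 := by
    rcases hslack with h | h <;> simp only [h, tsub_self, zero_mul, mul_zero]
  rw [inverseReweighting, withDensity_add_measure, hinv, withDensity_smul_measure,
    dirac_withDensity' hg, smul_smul, hatom, zero_smul, add_zero]

end inverseReweighting

/-! ### The optimal multiplier -/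

lemma one_sub_mul_le_one_add_mul {d l t : ℝ} (hl : 0 ≤ l) (ht : -d ≤ t) :
    1 - l * d ≤ 1 + l * t := by
  nlinarith

lemma abs_div_le_abs_div_of_le {a b c : ℝ} (hc : 0 < c) (hcb : c ≤ b) : |a / b| ≤ |a| / c := by
  rw [abs_div, abs_of_pos (hc.trans_le hcb)]
  gcongr

section Multiplier

variable {ν : Measure Ω} {f : Ω → ℝ} {d : ℝ}

lemma integrable_div_one_add_mul (hf : Integrable f ν) (hfd : ∀ᵐ ω ∂ν, -d ≤ f ω) {l : ℝ}
    (hl : 0 ≤ l) (hld : l * d < 1) :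
    Integrable (fun ω => f ω / (1 + l * f ω)) ν := by
  refine (hf.abs.div_const (1 - l * d)).mono'
    (hf.aemeasurable.div ((hf.aemeasurable.const_mul l).const_add 1)).aestronglyMeasurable ?_
  filter_upwards [hfd] with ω hω using
    abs_div_le_abs_div_of_le (sub_pos.mpr hld) (one_sub_mul_le_one_add_mul hl hω)

lemma continuousOn_integral_div_one_add_mul (hf : Integrable f ν) (hd : 0 ≤ d)
    (hfd : ∀ᵐ ω ∂ν, -d ≤ f ω) {b : ℝ} (hbd : b * d < 1) :
    ContinuousOn (fun l => ∫ ω, f ω / (1 + l * f ω) ∂ν) (Icc 0 b) := by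
  have hbd_pos : 0 < 1 - b * d := sub_pos.mpr hbd
  have hlower {l t : ℝ} (hl : l ∈ Icc 0 b) (ht : -d ≤ t) : 1 - b * d ≤ 1 + l * t :=
    (sub_le_sub_left (mul_le_mul_of_nonneg_right hl.2 hd) 1).trans
      (one_sub_mul_le_one_add_mul hl.1 ht)
  refine continuousOn_of_dominated (bound := fun ω => |f ω| / (1 - b * d)) (fun l _ => ?_)
    (fun l hl => ?_) (hf.abs.div_const _) ?_
  · exact (hf.aemeasurable.div
      ((hf.aemeasurable.const_mul l).const_add 1)).aestronglyMeasurable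
  · filter_upwards [hfd] with ω hω using abs_div_le_abs_div_of_le hbd_pos (hlower hl hω)
  · filter_upwards [hfd] with ω hω
    exact ContinuousOn.div (by fun_prop) (by fun_prop) fun l hl =>
      (hbd_pos.trans_le (hlower hl hω)).ne'

lemma lintegral_inv_one_add_mul [IsProbabilityMeasure ν] (hf : Integrable f ν)
    (hfd : ∀ᵐ ω ∂ν, -d ≤ f ω) {l : ℝ} (hl : 0 ≤ l) (hld : l * d < 1) :
    ∫⁻ ω, (ENNReal.ofReal (1 + l * f ω))⁻¹ ∂ν =
      ENNReal.ofReal (1 - l * ∫ ω, f ω / (1 + l * f ω) ∂ν) := by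
  have hquot := (integrable_div_one_add_mul hf hfd hl hld).const_mul l
  have hpos : ∀ᵐ ω ∂ν, 0 < 1 + l * f ω := by
    filter_upwards [hfd] with ω hω using
      (sub_pos.mpr hld).trans_le (one_sub_mul_le_one_add_mul hl hω)
  have hinv : ∀ᵐ ω ∂ν, 1 - l * (f ω / (1 + l * f ω)) = (1 + l * f ω)⁻¹ := by
    filter_upwards [hpos] with ω hω
    field_simp
    ring
  calc ∫⁻ ω, (ENNReal.ofReal (1 + l * f ω))⁻¹ ∂ν
      = ∫⁻ ω, ENNReal.ofReal (1 - l * (f ω / (1 + l * f ω))) ∂ν := by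
        apply lintegral_congr_ae
        filter_upwards [hpos, hinv] with ω h₁ h₂
        rw [h₂, ENNReal.ofReal_inv_of_pos h₁]
    _ = ENNReal.ofReal (∫ ω, (1 - l * (f ω / (1 + l * f ω))) ∂ν) := by
        refine (ofReal_integral_eq_lintegral_ofReal ((integrable_const 1).sub hquot) ?_).symm
        filter_upwards [hpos, hinv] with ω h₁ h₂
        exact (inv_pos.mpr h₁).le.trans_eq h₂.symm
    _ = ENNReal.ofReal (1 - l * ∫ ω, f ω / (1 + l * f ω) ∂ν) := by
        rw [integral_sub (integrable_const 1) hquot, integral_const_mul, integral_const,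
          probReal_univ, one_smul]

/- The integral of `f / (1 + l * f)` is the derivative at `l` of the dual objective
`∫ log (1 + l * f) ∂ν`. It is positive at `l = 0`: either it vanishes before `1 / d`, and then
the mass is one, or it stays positive, and then the mass at `1 / d` is controlled by Fatou. -/
theorem exists_multiplier [IsProbabilityMeasure ν] (hf : Integrable f ν) (hd : 0 < d)
    (hfd : ∀ᵐ ω ∂ν, -d ≤ f ω) (hmean : 0 < ∫ ω, f ω ∂ν) :
    ∃ l ∈ Ioc 0 (1 / d), ∫⁻ ω, (ENNReal.ofReal (1 + l * f ω))⁻¹ ∂ν ≤ 1 ∧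
      (∫⁻ ω, (ENNReal.ofReal (1 + l * f ω))⁻¹ ∂ν = 1 ∨ l = 1 / d) := by
  set φ : ℝ → ℝ := fun l => ∫ ω, f ω / (1 + l * f ω) ∂ν with hφ
  have hφ0 : 0 < φ 0 := by simpa only [hφ, zero_mul, add_zero, div_one] using hmean
  have hmass {l : ℝ} (hl : 0 ≤ l) (hld : l < 1 / d) :=
    lintegral_inv_one_add_mul hf hfd hl ((lt_div_iff₀ hd).mp hld)
  by_cases hsign : ∃ b, 0 ≤ b ∧ b < 1 / d ∧ φ b ≤ 0
  · obtain ⟨b, hb0, hbd, hφb⟩ := hsign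
    have hcont := continuousOn_integral_div_one_add_mul hf hd.le hfd ((lt_div_iff₀ hd).mp hbd)
    obtain ⟨l, hl, hφl⟩ := intermediate_value_Icc' hb0 hcont ⟨hφb, hφ0.le⟩
    have hl0 : l ≠ 0 := fun h => hφ0.ne' (h ▸ hφl)
    have hl1 : ∫⁻ ω, (ENNReal.ofReal (1 + l * f ω))⁻¹ ∂ν = 1 := by
      rw [hmass hl.1 (hl.2.trans_lt hbd)]
      simp only [hφl, mul_zero, sub_zero, ENNReal.ofReal_one]
    exact ⟨l, ⟨hl.1.lt_of_ne' hl0, (hl.2.trans_lt hbd).le⟩, hl1.le, .inl hl1⟩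
  · push Not at hsign
    have hd' : 0 < 1 / d := one_div_pos.mpr hd
    refine ⟨1 / d, ⟨hd', le_rfl⟩, ?_, .inr rfl⟩
    refine lintegral_le_of_tendsto (u := 𝓝[<] (1 / d))
      (F := fun l ω => (ENNReal.ofReal (1 + l * f ω))⁻¹) (fun l => ?_) (.of_forall fun ω => ?_) ?_
    · exact ((hf.aemeasurable.const_mul l).const_add 1).ennreal_ofReal.inv
    · have hcont : Continuous fun l : ℝ => (ENNReal.ofReal (1 + l * f ω))⁻¹ :=
        (ENNReal.continuous_ofReal.comp (by fun_prop)).inv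
      exact hcont.continuousWithinAt.tendsto
    · filter_upwards [Ioo_mem_nhdsLT hd'] with l hl
      rw [hmass hl.1.le hl.2, ENNReal.ofReal_le_one, sub_le_self_iff]
      exact (mul_pos hl.1 (hsign l hl.1.le hl.2)).le

end Multiplier

/-! ### Duality under one moment constraint -/

/-- The feasible set of the moment problem: the probability measures carried by `K` for which `f`
has a well-defined and nonpositive mean. -/
def momentFeasible (K : Set Ω) (f : Ω → ℝ) : Set (Measure Ω) :=
  {κ | IsProbabilityMeasure κ ∧ (∀ᵐ ω ∂κ, ω ∈ K) ∧ Integrable f κ ∧ ∫ ω, f ω ∂κ ≤ 0}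

section Duality

variable {K : Set Ω} {f : Ω → ℝ} {d l : ℝ}

lemma one_add_mul_nonneg (hd : 0 < d) (hl : l ∈ Icc 0 (1 / d)) {t : ℝ} (ht : -d ≤ t) :
    0 ≤ 1 + l * t :=
  (sub_nonneg.mpr ((le_div_iff₀ hd).mp hl.2)).trans (one_sub_mul_le_one_add_mul hl.1 ht)

lemma integral_one_add_mul {κ : Measure Ω} [IsProbabilityMeasure κ] (hf : Integrable f κ) :
    ∫ ω, (1 + l * f ω) ∂κ = 1 + l * ∫ ω, f ω ∂κ := by
  rw [integral_add (integrable_const 1) (hf.const_mul l), integral_const_mul, integral_const,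
    probReal_univ, one_smul]

theorem ofReal_integral_log_one_add_mul_le_klDiv {ν κ : Measure Ω} [IsFiniteMeasure ν]
    (hfm : Measurable f) (hd : 0 < d) (hfd : ∀ ω ∈ K, -d ≤ f ω) (hκ : κ ∈ momentFeasible K f)
    (hl : l ∈ Icc 0 (1 / d)) (hpos : ∀ᵐ ω ∂ν, 0 < 1 + l * f ω)
    (hlog : Integrable (fun ω => Real.log (1 + l * f ω)) ν) :
    ENNReal.ofReal (∫ ω, Real.log (1 + l * f ω) ∂ν) ≤ klDiv ν κ := by
  obtain ⟨_, hκK, hfκ, hmean⟩ := hκ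
  refine ofReal_integral_log_le_klDiv (by fun_prop) hpos hlog
    ((integrable_const 1).add (hfκ.const_mul l)) ?_ ?_
  · filter_upwards [hκK] with ω hω using one_add_mul_nonneg hd hl (hfd ω hω)
  · rw [integral_one_add_mul hfκ, probReal_univ]
    linarith [mul_nonpos_of_nonneg_of_nonpos hl.1 hmean]

lemma inverseReweighting_mem_momentFeasible {ν : Measure Ω} [IsProbabilityMeasure ν] {e : Ω}
    (hK : MeasurableSet K) (hνK : ∀ᵐ ω ∂ν, ω ∈ K) (hfm : Measurable f)
    (he : e ∈ K) (hl : 0 < l) (hnonneg : ∀ ω ∈ K, 0 ≤ 1 + l * f ω)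
    (hmass : ∫⁻ ω, (ENNReal.ofReal (1 + l * f ω))⁻¹ ∂ν ≤ 1)
    (hν : (inverseReweighting ν (fun ω => ENNReal.ofReal (1 + l * f ω)) e).withDensity
      (fun ω => ENNReal.ofReal (1 + l * f ω)) = ν) :
    inverseReweighting ν (fun ω => ENNReal.ofReal (1 + l * f ω)) e ∈ momentFeasible K f := by
  set κ := inverseReweighting ν (fun ω => ENNReal.ofReal (1 + l * f ω)) e
  have : IsProbabilityMeasure κ := inverseReweighting.isProbabilityMeasure hmass
  have hκK : ∀ᵐ ω ∂κ, ω ∈ K := inverseReweighting.ae_mem hK he hνK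
  have hg0 : 0 ≤ᵐ[κ] fun ω => 1 + l * f ω := hκK.mono hnonneg
  have hlint : ∫⁻ ω, ENNReal.ofReal (1 + l * f ω) ∂κ = 1 := by
    rw [← setLIntegral_univ, ← withDensity_apply _ .univ, hν, measure_univ]
  have hg : Integrable (fun ω => 1 + l * f ω) κ :=
    (lintegral_ofReal_ne_top_iff_integrable (by fun_prop) hg0).mp (hlint ▸ ENNReal.one_ne_top)
  have hf : Integrable f κ := by
    simpa [hl.ne'] using (hg.sub (integrable_const 1)).const_mul l⁻¹
  have hmean : 1 + l * ∫ ω, f ω ∂κ = 1 := by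
    rw [← integral_one_add_mul hf, integral_eq_lintegral_of_nonneg_ae hg0 hg.1, hlint,
      ENNReal.toReal_one]
  exact ⟨this, hκK, hf, (by simpa [hl.ne'] using hmean : ∫ ω, f ω ∂κ = 0).le⟩

theorem exists_klDiv_eq_integral_log_one_add_mul {ν : Measure Ω} [IsProbabilityMeasure ν] {e : Ω}
    (hK : MeasurableSet K) (hνK : ∀ᵐ ω ∂ν, ω ∈ K) (hfm : Measurable f) (hf : Integrable f ν)
    (hd : 0 < d) (hfd : ∀ ω ∈ K, -d ≤ f ω) (he : e ∈ K) (hfe : f e = -d) :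
    ∃ l ∈ Icc 0 (1 / d), ∃ κ ∈ momentFeasible K f, (∀ᵐ ω ∂ν, 0 < 1 + l * f ω) ∧
      Integrable (fun ω => Real.log (1 + l * f ω)) ν ∧
      (klDiv ν κ : EReal) = ((∫ ω, Real.log (1 + l * f ω) ∂ν : ℝ) : EReal) := by
  rcases le_or_gt (∫ ω, f ω ∂ν) 0 with hmean | hmean
  · exact ⟨0, ⟨le_rfl, by positivity⟩, ν, ⟨‹_›, hνK, hf, hmean⟩, by simp⟩
  obtain ⟨l, hl, hmass, hslack⟩ := exists_multiplier hf hd (hνK.mono hfd) hmean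
  have hgm : Measurable fun ω => ENNReal.ofReal (1 + l * f ω) := by fun_prop
  have hfin := (hmass.trans_lt ENNReal.one_lt_top).ne
  have hpos : ∀ᵐ ω ∂ν, 0 < 1 + l * f ω := by
    filter_upwards [ae_lt_top hgm.inv hfin] with ω hω
    simpa only [Pi.inv_apply, ENNReal.inv_lt_top, ENNReal.ofReal_pos] using hω
  have hinv : Integrable (fun ω => (1 + l * f ω)⁻¹) ν := by
    refine (integrable_toReal_of_lintegral_ne_top hgm.inv.aemeasurable hfin).congr ?_
    filter_upwards [hpos] with ω hω
    rw [Pi.inv_apply, ENNReal.toReal_inv, ENNReal.toReal_ofReal hω.le]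
  have hlog := integrable_log_of_integrable_inv hpos
    ((integrable_const 1).add (hf.const_mul l)) hinv
  have hrec := inverseReweighting.withDensity_eq (e := e) hgm
    (hpos.mono fun ω hω => (ENNReal.ofReal_pos.mpr hω).ne')
    (.of_forall fun _ => ENNReal.ofReal_ne_top)
    (hslack.imp_right fun h => by simp [h, hfe, hd.ne'])
  have hκ := inverseReweighting_mem_momentFeasible hK hνK hfm he hl.1
    (fun ω hω => one_add_mul_nonneg hd (Ioc_subset_Icc_self hl) (hfd ω hω)) hmass hrec
  have := hκ.1
  exact ⟨l, Ioc_subset_Icc_self hl, _, hκ, hpos, hlog,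
    coe_klDiv_eq_integral_log_of_withDensity_eq (by fun_prop) hpos
      (measure_univ.trans measure_univ.symm) hlog hrec⟩

end Duality

end MeasurableSpace

/-! ### Extended-real integrals of logarithms -/

lemma KLdiv_eq_klDiv (ν κ : Measure ℝ) [IsProbabilityMeasure ν] [IsProbabilityMeasure κ] :
    KLdiv ν κ = klDiv ν κ := by
  rw [KLdiv, klDiv_def]
  simp only [probReal_univ, add_sub_cancel_right]

lemma erealPos_elog {z : ℝ} (hz : 0 < z) : erealPos (elog z) = ENNReal.ofReal (Real.log z) := by
  simp [erealPos, elog, not_le.mpr hz]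

lemma erealPos_neg_elog (z : ℝ) :
    erealPos (-elog z) = if z ≤ 0 then ∞ else ENNReal.ofReal (-Real.log z) := by
  by_cases hz : z ≤ 0 <;> simp [erealPos, elog, hz]

lemma measurable_erealPos_neg_elog : Measurable fun z => erealPos (-elog z) := by
  simp only [erealPos_neg_elog]
  exact .ite measurableSet_Iic measurable_const Real.measurable_log.neg.ennreal_ofReal

lemma lintegral_erealPos_neg_elog {ν : Measure ℝ} {g : ℝ → ℝ} (hpos : ∀ᵐ y ∂ν, 0 < g y) :
    ∫⁻ y, erealPos (-elog (g y)) ∂ν = ∫⁻ y, ENNReal.ofReal (-Real.log (g y)) ∂ν :=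
  lintegral_congr_ae (hpos.mono fun y hy => by
    simp only [erealPos_neg_elog, not_le.mpr hy, if_false])

lemma integralEReal_elog_eq_integral_log {ν : Measure ℝ} {g : ℝ → ℝ} (hpos : ∀ᵐ y ∂ν, 0 < g y)
    (hlog : Integrable (fun y => Real.log (g y)) ν) :
    integralEReal ν (fun y => elog (g y)) = ((∫ y, Real.log (g y) ∂ν : ℝ) : EReal) := by
  rw [integralEReal, lintegral_congr_ae (hpos.mono fun y hy => erealPos_elog hy),
    lintegral_erealPos_neg_elog hpos,
    integral_eq_lintegral_pos_part_sub_lintegral_neg_part hlog, EReal.coe_sub,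
    EReal.coe_ennreal_toReal hlog.lintegral_lt_top.ne,
    EReal.coe_ennreal_toReal (x := ∫⁻ y, ENNReal.ofReal (-Real.log (g y)) ∂ν)
      hlog.neg.lintegral_lt_top.ne]

lemma ae_pos_and_integrable_log_of_integralEReal_elog_ne_bot {ν : Measure ℝ} {g : ℝ → ℝ}
    (hg : Integrable g ν) (hbot : integralEReal ν (fun y => elog (g y)) ≠ ⊥) :
    (∀ᵐ y ∂ν, 0 < g y) ∧ Integrable (fun y => Real.log (g y)) ν := by
  have hneg : ∫⁻ y, erealPos (-elog (g y)) ∂ν ≠ ∞ := fun h => hbot <| by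
    rw [integralEReal, h, EReal.coe_ennreal_top, EReal.sub_top]
  have hpos : ∀ᵐ y ∂ν, 0 < g y := by
    filter_upwards [ae_lt_top'
      (measurable_erealPos_neg_elog.comp_aemeasurable hg.aemeasurable) hneg] with y hy
    by_contra hy0
    simp [erealPos_neg_elog, not_lt.mp hy0] at hy
  refine ⟨hpos, ?_⟩
  rw [lintegral_erealPos_neg_elog hpos] at hneg
  have hlogm := hg.aemeasurable.log
  refine ((integrable_toReal_of_lintegral_ne_top hlogm.neg.ennreal_ofReal hneg).add hg).mono'
    hlogm.aestronglyMeasurable ?_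
  filter_upwards [hpos] with y hy
  have hlog_le := Real.log_le_sub_one_of_pos hy
  simp only [Pi.add_apply, Pi.neg_apply, ENNReal.toReal_ofReal', Real.norm_eq_abs, abs_le]
  constructor
  · linarith [le_max_left (-Real.log (g y)) 0]
  · linarith [le_max_right (-Real.log (g y)) 0]

theorem iInf_KLdiv_eq_iSup_integralEReal_elog {ν : Measure ℝ} [IsProbabilityMeasure ν]
    {K : Set ℝ} {f : ℝ → ℝ} {d e : ℝ}
    (hK : MeasurableSet K) (hνK : ∀ᵐ y ∂ν, y ∈ K) (hfm : Measurable f) (hf : Integrable f ν)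
    (hd : 0 < d) (hfd : ∀ y ∈ K, -d ≤ f y) (he : e ∈ K) (hfe : f e = -d) :
    ((⨅ κ ∈ momentFeasible K f, KLdiv ν κ : ℝ≥0∞) : EReal) =
      ⨆ l ∈ Icc 0 (1 / d), integralEReal ν (fun y => elog (1 + l * f y)) := by
  have hKL : ⨅ κ ∈ momentFeasible K f, KLdiv ν κ = ⨅ κ ∈ momentFeasible K f, klDiv ν κ :=
    biInf_congr fun κ hκ => have := hκ.1; KLdiv_eq_klDiv ν κ
  rw [hKL]
  apply le_antisymm
  · obtain ⟨l, hl, κ, hκ, hpos, hlog, hκ_eq⟩ :=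
      exists_klDiv_eq_integral_log_one_add_mul hK hνK hfm hf hd hfd he hfe
    calc ((⨅ κ ∈ momentFeasible K f, klDiv ν κ : ℝ≥0∞) : EReal)
        ≤ klDiv ν κ := EReal.coe_ennreal_le_coe_ennreal_iff.mpr (iInf₂_le κ hκ)
      _ = integralEReal ν (fun y => elog (1 + l * f y)) := by
          rw [hκ_eq, integralEReal_elog_eq_integral_log hpos hlog]
      _ ≤ _ := le_iSup₂ (f := fun l _ => integralEReal ν (fun y => elog (1 + l * f y))) l hl
  · refine iSup₂_le fun l hl => ?_
    by_cases hbot : integralEReal ν (fun y => elog (1 + l * f y)) = ⊥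
    · exact hbot ▸ bot_le
    have hg : Integrable (fun y => 1 + l * f y) ν := (integrable_const 1).add (hf.const_mul l)
    obtain ⟨hpos, hlog⟩ := ae_pos_and_integrable_log_of_integralEReal_elog_ne_bot hg hbot
    have hweak : ENNReal.ofReal (∫ y, Real.log (1 + l * f y) ∂ν) ≤
        ⨅ κ ∈ momentFeasible K f, klDiv ν κ :=
      le_iInf₂ fun κ hκ => ofReal_integral_log_one_add_mul_le_klDiv hfm hd hfd hκ hl hpos hlog
    calc integralEReal ν (fun y => elog (1 + l * f y))
        = ((∫ y, Real.log (1 + l * f y) ∂ν : ℝ) : EReal) :=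
          integralEReal_elog_eq_integral_log hpos hlog
      _ ≤ (ENNReal.ofReal (∫ y, Real.log (1 + l * f y) ∂ν) : EReal) := by
          rw [EReal.coe_ennreal_ofReal]
          exact EReal.coe_le_coe_iff.mpr (le_max_left _ _)
      _ ≤ ((⨅ κ ∈ momentFeasible K f, klDiv ν κ : ℝ≥0∞) : EReal) :=
          EReal.coe_ennreal_le_coe_ennreal_iff.mpr hweak

/-! ### Distributions on the unit interval -/

lemma integrable_of_mem_Bset {κ : Measure ℝ} (hκ : κ ∈ Bset) {f : ℝ → ℝ} (hf : Continuous f) :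
    Integrable f κ := by
  have := hκ.1
  rw [← Measure.restrict_eq_self_of_ae_mem (s := Icc 0 1) hκ.2]
  exact hf.continuousOn.integrableOn_compact isCompact_Icc

lemma mem_momentFeasible_Icc_iff {κ : Measure ℝ} {f : ℝ → ℝ} (hf : Continuous f) :
    κ ∈ momentFeasible (Icc 0 1) f ↔ κ ∈ Bset ∧ ∫ y, f y ∂κ ≤ 0 :=
  ⟨fun ⟨h, hK, _, hmean⟩ => ⟨⟨h, hK⟩, hmean⟩,
    fun ⟨hκ, hmean⟩ => ⟨hκ.1, hκ.2, integrable_of_mem_Bset hκ hf, hmean⟩⟩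

lemma momentFeasible_sub_const (x : ℝ) :
    momentFeasible (Icc 0 1) (fun y => y - x) = {κ ∈ Bset | mmean κ ≤ x} := by
  ext κ
  rw [mem_momentFeasible_Icc_iff (by fun_prop)]
  refine and_congr_right fun hκ => ?_
  have := hκ.1
  rw [integral_sub (integrable_of_mem_Bset hκ continuous_id') (integrable_const x),
    integral_const, probReal_univ, one_smul, sub_nonpos, mmean]

lemma momentFeasible_const_sub (x : ℝ) :
    momentFeasible (Icc 0 1) (fun y => x - y) = {κ ∈ Bset | x ≤ mmean κ} := by
  ext κ
  rw [mem_momentFeasible_Icc_iff (by fun_prop)]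
  refine and_congr_right fun hκ => ?_
  have := hκ.1
  rw [integral_sub (integrable_const x) (integrable_of_mem_Bset hκ continuous_id'),
    integral_const, probReal_univ, one_smul, sub_nonpos, mmean]

/-- Dual representation of `KL_inf` for bounded distributions: for every
`ν ∈ B` and `x ∈ (0,1)`,
`KL_inf^U(ν,B,x) = sup_{λ ∈ [0,1/(1−x)]} E_ν[log(1 − λ(X−x))]` and
`KL_inf^L(ν,B,x) = sup_{λ ∈ [0,1/x]} E_ν[log(1 + λ(X−x))]`,
with the convention `log z = −∞` for `z ≤ 0`. -/
theorem stmt_15 (ν : Measure ℝ) (hν : ν ∈ Bset) (x : ℝ) (hx : x ∈ Set.Ioo (0:ℝ) 1) :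
    (((KLinfU ν x : ℝ≥0∞) : EReal) =
      ⨆ l ∈ Set.Icc (0:ℝ) (1 / (1 - x)),
        integralEReal ν (fun y => elog (1 - l * (y - x)))) ∧
    (((KLinfL ν x : ℝ≥0∞) : EReal) =
      ⨆ l ∈ Set.Icc (0:ℝ) (1 / x),
        integralEReal ν (fun y => elog (1 + l * (y - x)))) := by
  have := hν.1
  obtain ⟨hx0, hx1⟩ := hx
  constructor
  · rw [KLinfU, ← momentFeasible_const_sub,
      iInf_KLdiv_eq_iSup_integralEReal_elog measurableSet_Icc hν.2 (by fun_prop)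
        (integrable_of_mem_Bset hν (by fun_prop)) (sub_pos.mpr hx1)
        (fun y hy => by linarith [hy.2]) (right_mem_Icc.mpr zero_le_one) (neg_sub 1 x).symm]
    simp only [← sub_neg_eq_add, ← mul_neg, neg_sub]
  · rw [KLinfL, ← momentFeasible_sub_const,
      iInf_KLdiv_eq_iSup_integralEReal_elog measurableSet_Icc hν.2 (by fun_prop)
        (integrable_of_mem_Bset hν (by fun_prop)) hx0
        (fun y hy => by linarith [hy.1]) (left_mem_Icc.mpr zero_le_one) (zero_sub x)]
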